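/- Let a ∈ ℕ^ℕ be the sequence defined by a_j = 2^j if j is even and a_j = 1 if j is odd, and let x = [a_1,a_2,…] be the irrational number of (0,1) with this continued fraction expansion. Then the Hölder exponent of f_1 at x equals 0: h_{f_1}(x) = 0. In particular, f_1 is a multifractal function. -/

import Mathlib

open Filter Finset MeasureTheory

/-- `qden a n` is the denominator `q_n` of the continued fraction with partial
quotients `a_1 = a 0, a_2 = a 1, …` (0-indexed sequence `a`), defined by
`q_0 = 1`, `q_1 = a_1`, `q_n = a_n q_{n-1} + q_{n-2}`. -/
def qden (a : ℕ → ℕ+) : ℕ → ℕ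
  | 0 => 1
  | 1 => a 0
  | (n+2) => (a (n+1) : ℕ) * qden a (n+1) + qden a n

/-- `pnum a n` is the numerator `p_n`, defined by `p_0 = 0`, `p_1 = 1`,
`p_n = a_n p_{n-1} + p_{n-2}`. -/
def pnum (a : ℕ → ℕ+) : ℕ → ℕ
  | 0 => 0
  | 1 => 1
  | (n+2) => (a (n+1) : ℕ) * pnum a (n+1) + pnum a n

/-- The value `[a_1, a_2, …]` of the infinite continued fraction with partial quotients
`a_1 = a 0, a_2 = a 1, …`, i.e. the limit of the convergents `p_n / q_n` (which always
exists). -/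
noncomputable def cfVal (a : ℕ → ℕ+) : ℝ :=
  limUnder atTop (fun n => (pnum a n : ℝ) / (qden a n : ℝ))

/-- The set `I` of irrational numbers of `[0,1]`. -/
def Iirr : Set ℝ := {x | x ∈ Set.Icc (0:ℝ) 1 ∧ Irrational x}

/-- The (unique) sequence of partial quotients of `x`, when `x` has a continued
fraction expansion. -/
noncomputable def coeff (x : ℝ) : ℕ → ℕ+ := by
  classical
  exact if h : ∃ a : ℕ → ℕ+, cfVal a = x then h.choose else fun _ => 1

/-- First component of Cantor's bijection: `f₁([a_1,a_2,…]) = [a_1,a_3,a_5,…]`. -/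
noncomputable def cantorF1 (x : ℝ) : ℝ := cfVal (fun j => coeff x (2*j))

/-- Second component of Cantor's bijection: `f₂([a_1,a_2,…]) = [a_2,a_4,a_6,…]`. -/
noncomputable def cantorF2 (x : ℝ) : ℝ := cfVal (fun j => coeff x (2*j+1))

/-- `g ∈ Λ^α(x)`, where `g` is viewed as a function on the set `A`. -/
def memHolder (g : ℝ → ℝ) (A : Set ℝ) (x : ℝ) (α : ℝ) : Prop :=
  ∃ C > 0, ∀ y ∈ A, |g x - g y| ≤ C * |x - y| ^ α

/-- The pointwise Hölder exponent `h_g(x)` of `g : A → ℝ` at `x`. -/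
noncomputable def holderExp (g : ℝ → ℝ) (A : Set ℝ) (x : ℝ) : ℝ :=
  sSup {α : ℝ | α ∈ Set.Icc (0:ℝ) 1 ∧ memHolder g A x α}

/-! The tails `u n = [a_{n+1}, a_{n+2}, …]` of a continued fraction satisfy
`u n = 1 / (a_{n+1} + u (n+1))`. Hence two continued fractions with tails `u`, `v` and the same
first `n` partial quotients differ by exactly `(∏ i < n, u i * v i) * |u n - v n|`, where each tail
`u i` is squeezed between `1 / (a_{i+1} + 1)` and `1 / a_{i+1}`.

Changing `a_{2n+1}` into `a_{2n+1} + 1` therefore moves `x` by at most the inverse square of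
`a_2 a_4 ⋯ a_{2n}`. It moves `f₁ x`, which does not see these quotients, by at least `c ^ n` for
some `c > 0` if the quotients `a_1, a_3, …` are bounded. When `a_2 a_4 ⋯ a_{2n}` grows
superexponentially, this contradicts every positive Hölder exponent. At `[1, 1, …]`, on the other
hand, agreement of exactly `n` quotients keeps `x` and `y` at distance at least of order `4 ^ (-n)`,
while `f₁ x` and `f₁ y` agree in about `n / 2` quotients and so are exponentially close in `n`;
hence the exponent there is positive. (Indices start at `1` here, and at `0` in the code.) -/

section Convergents

variable (a : ℕ → ℕ+)

lemma qden_pos (n : ℕ) : 0 < qden a n := by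
  induction n using Nat.twoStepInduction with
  | zero => exact one_pos
  | one => exact (a 0).pos
  | more n ih _ => exact Nat.add_pos_right _ ih

lemma pnum_succ (n : ℕ) : pnum a (n + 1) = qden (fun j => a (j + 1)) n := by
  induction n using Nat.twoStepInduction with
  | zero => rfl
  | one => simp [pnum, qden]
  | more n ih ih' => rw [pnum, ih, ih', qden]

lemma qden_succ (n : ℕ) :
    qden a (n + 1) = a 0 * qden (fun j => a (j + 1)) n + pnum (fun j => a (j + 1)) n := by
  induction n using Nat.twoStepInduction with
  | zero => simp [qden, pnum]
  | one => simp [qden, pnum, mul_comm]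
  | more n ih ih' =>
    rw [qden, ih, ih', qden, pnum]
    ring

lemma pnum_succ_mul_qden_sub (n : ℕ) :
    (pnum a (n + 1) : ℝ) * qden a n - pnum a n * qden a (n + 1) = (-1) ^ n := by
  induction n with
  | zero => simp [pnum, qden]
  | succ n ih =>
    rw [pnum, qden, pow_succ, ← ih]
    push_cast
    ring

lemma two_pow_le_qden_mul_qden_succ (n : ℕ) : 2 ^ n ≤ qden a n * qden a (n + 1) := by
  induction n with
  | zero => simpa [qden] using Nat.one_le_iff_ne_zero.2 (a 0).ne_zero
  | succ n ih =>
    have hrec : qden a (n + 2) = a (n + 1) * qden a (n + 1) + qden a n := rfl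
    have hstep : qden a (n + 1) ≤ a (n + 1) * qden a (n + 1) :=
      Nat.le_mul_of_pos_left _ (a (n + 1)).pos
    have hmono : qden a n ≤ qden a (n + 1) := by
      cases n with
      | zero => exact (a 0).pos
      | succ n => exact (Nat.le_mul_of_pos_left _ (a (n + 1)).pos).trans (Nat.le_add_right _ _)
    calc 2 ^ (n + 1) ≤ 2 * (qden a n * qden a (n + 1)) := by rw [pow_succ']; gcongr
      _ = qden a (n + 1) * (2 * qden a n) := by ring
      _ ≤ qden a (n + 1) * qden a (n + 2) := by gcongr; omega

lemma tendsto_pnum_div_qden :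
    Tendsto (fun n => (pnum a n : ℝ) / qden a n) atTop (nhds (cfVal a)) := by
  refine (cauchySeq_of_le_geometric (1 / 2) 1 (by norm_num) fun n => ?_).tendsto_limUnder
  have hn : (0 : ℝ) < qden a n := mod_cast qden_pos a n
  have hn' : (0 : ℝ) < qden a (n + 1) := mod_cast qden_pos a (n + 1)
  rw [dist_comm, Real.dist_eq, div_sub_div _ _ hn'.ne' hn.ne', mul_comm (qden a (n + 1) : ℝ),
    pnum_succ_mul_qden_sub, abs_div, abs_pow, abs_neg, abs_one, one_pow, one_mul, one_div_pow,
    abs_of_pos (by positivity), mul_comm (qden a (n + 1) : ℝ)]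
  exact one_div_le_one_div_of_le (by positivity) (mod_cast two_pow_le_qden_mul_qden_succ a n)

lemma cfVal_nonneg : 0 ≤ cfVal a :=
  ge_of_tendsto' (tendsto_pnum_div_qden a) fun _ => by positivity

lemma cfVal_eq_inv : cfVal a = (a 0 + cfVal fun j => a (j + 1))⁻¹ := by
  have : (0 : ℝ) < a 0 := mod_cast (a 0).pos
  have htail := cfVal_nonneg fun j => a (j + 1)
  refine tendsto_nhds_unique ((tendsto_add_atTop_iff_nat 1).2 (tendsto_pnum_div_qden a)) ?_
  refine (((tendsto_pnum_div_qden _).const_add _).inv₀ (by positivity)).congr fun n => ?_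
  have hq : (0 : ℝ) < qden (fun j => a (j + 1)) n := mod_cast qden_pos _ n
  rw [qden_succ, pnum_succ]
  push_cast
  field_simp

end Convergents

/-- `u` is a sequence of nonnegative numbers unfolding as `u 0 = 1 / (a 0 + 1 / (a 1 + ⋯))`, that is
`u n = [a_{n+1}, a_{n+2}, …]`. Keeping `u` abstract covers both the tails of `cfVal a` and the orbit
of an irrational under the Gauss map. -/
structure IsTailSeq (a : ℕ → ℕ+) (u : ℕ → ℝ) : Prop where
  nonneg : ∀ n, 0 ≤ u n
  eq_inv : ∀ n, u n = (a n + u (n + 1))⁻¹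

namespace IsTailSeq

variable {a b : ℕ → ℕ+} {u v : ℕ → ℝ}

lemma denom_pos (hu : IsTailSeq a u) (n : ℕ) : 0 < a n + u (n + 1) :=
  add_pos_of_pos_of_nonneg (mod_cast (a n).pos) (hu.nonneg _)

lemma pos (hu : IsTailSeq a u) (n : ℕ) : 0 < u n := by
  rw [hu.eq_inv]
  exact inv_pos.2 (hu.denom_pos n)

lemma le_inv (hu : IsTailSeq a u) (n : ℕ) : u n ≤ (a n : ℝ)⁻¹ := by
  rw [hu.eq_inv]
  exact inv_anti₀ (mod_cast (a n).pos) (le_add_of_nonneg_right (hu.nonneg _))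

lemma lt_one (hu : IsTailSeq a u) (n : ℕ) : u n < 1 := by
  have ha : (1 : ℝ) ≤ a n := mod_cast (a n).pos
  rw [hu.eq_inv]
  exact inv_lt_one_of_one_lt₀ (by linarith [hu.pos (n + 1)])

lemma inv_add_one_le (hu : IsTailSeq a u) (n : ℕ) : (a n + 1 : ℝ)⁻¹ ≤ u n := by
  rw [hu.eq_inv n]
  exact inv_anti₀ (hu.denom_pos n) (by linarith [hu.lt_one (n + 1)])

lemma mul_succ_le_half (hu : IsTailSeq a u) (n : ℕ) : u n * u (n + 1) ≤ 1 / 2 := by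
  have ha : (1 : ℝ) ≤ a n := mod_cast (a n).pos
  rw [hu.eq_inv n, inv_mul_eq_div, div_le_div_iff₀ (hu.denom_pos n) two_pos]
  linarith [hu.lt_one (n + 1)]

lemma abs_sub_eq (hu : IsTailSeq a u) (hv : IsTailSeq b v) (n : ℕ) :
    |u n - v n| = u n * v n * |a n + u (n + 1) - (b n + v (n + 1))| := by
  rw [hu.eq_inv n, hv.eq_inv n, inv_sub_inv (hu.denom_pos n).ne' (hv.denom_pos n).ne', abs_div,
    abs_of_pos (mul_pos (hu.denom_pos n) (hv.denom_pos n)), abs_sub_comm, ← mul_inv,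
    inv_mul_eq_div]

lemma abs_sub_eq_prod (hu : IsTailSeq a u) (hv : IsTailSeq b v) {n : ℕ}
    (hab : ∀ i < n, a i = b i) :
    |u 0 - v 0| = (∏ i ∈ range n, u i * v i) * |u n - v n| := by
  induction n with
  | zero => simp
  | succ n ih =>
    rw [ih fun i hi => hab i (by omega), prod_range_succ, hu.abs_sub_eq hv n, hab n n.lt_succ_self,
      add_sub_add_left_eq_sub]
    ring

lemma abs_sub_le_one (hu : IsTailSeq a u) (hv : IsTailSeq b v) (n : ℕ) : |u n - v n| ≤ 1 :=
  abs_sub_le_of_nonneg_of_le (hu.nonneg n) (hu.lt_one n).le (hv.nonneg n) (hv.lt_one n).le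

lemma prod_nonneg (hu : IsTailSeq a u) (n : ℕ) : 0 ≤ ∏ i ∈ range n, u i :=
  Finset.prod_nonneg fun i _ => hu.nonneg i

lemma prod_range_two_mul_le (hu : IsTailSeq a u) (k : ℕ) :
    ∏ i ∈ range (2 * k), u i ≤ (1 / 2) ^ k := by
  induction k with
  | zero => simp
  | succ k ih =>
    rw [Nat.mul_succ, prod_range_succ, prod_range_succ, mul_assoc, pow_succ]
    exact mul_le_mul ih (hu.mul_succ_le_half _)
      (mul_nonneg (hu.nonneg _) (hu.nonneg _)) (by positivity)

lemma abs_sub_le_prod_mul_prod (hu : IsTailSeq a u) (hv : IsTailSeq b v) {n : ℕ}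
    (hab : ∀ i < n, a i = b i) :
    |u 0 - v 0| ≤ (∏ i ∈ range n, u i) * ∏ i ∈ range n, v i := by
  rw [hu.abs_sub_eq_prod hv hab, prod_mul_distrib]
  exact mul_le_of_le_one_right (mul_nonneg (hu.prod_nonneg n) (hv.prod_nonneg n))
    (hu.abs_sub_le_one hv n)

lemma abs_sub_le_quarter_pow (hu : IsTailSeq a u) (hv : IsTailSeq b v) {k : ℕ}
    (hab : ∀ i < 2 * k, a i = b i) : |u 0 - v 0| ≤ (1 / 4) ^ k :=
  calc |u 0 - v 0| ≤ (∏ i ∈ range (2 * k), u i) * ∏ i ∈ range (2 * k), v i :=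
        hu.abs_sub_le_prod_mul_prod hv hab
    _ ≤ (1 / 2) ^ k * (1 / 2) ^ k :=
        mul_le_mul (hu.prod_range_two_mul_le k) (hv.prod_range_two_mul_le k)
          (hv.prod_nonneg _) (by positivity)
    _ = (1 / 4) ^ k := by rw [← mul_pow]; norm_num

lemma prod_le_inv_prod (hu : IsTailSeq a u) (n : ℕ) :
    ∏ i ∈ range n, u i ≤ (∏ i ∈ range n, (a i : ℝ))⁻¹ := by
  rw [← prod_inv_distrib]
  exact prod_le_prod (fun i _ => hu.nonneg i) fun i _ => hu.le_inv i

lemma abs_sub_le_inv_prod_sq (hu : IsTailSeq a u) (hv : IsTailSeq b v) {n : ℕ}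
    (hab : ∀ i < n, a i = b i) : |u 0 - v 0| ≤ ((∏ i ∈ range n, (a i : ℝ)) ^ 2)⁻¹ := by
  have hprod : ∏ i ∈ range n, (b i : ℝ) = ∏ i ∈ range n, (a i : ℝ) :=
    prod_congr rfl fun i hi => by rw [hab i (mem_range.1 hi)]
  rw [sq, mul_inv]
  refine (hu.abs_sub_le_prod_mul_prod hv hab).trans ?_
  exact mul_le_mul (hu.prod_le_inv_prod n) (hprod ▸ hv.prod_le_inv_prod n)
    (hv.prod_nonneg n) (by positivity)

lemma apply_zero_unique (hu : IsTailSeq a u) (hv : IsTailSeq a v) : u 0 = v 0 := by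
  have hlim : Tendsto (fun k : ℕ => (1 / 4 : ℝ) ^ k) atTop (nhds 0) :=
    tendsto_pow_atTop_nhds_zero_of_lt_one (by norm_num) (by norm_num)
  exact eq_of_abs_sub_nonpos <|
    ge_of_tendsto' hlim fun _ => hu.abs_sub_le_quarter_pow hv fun _ _ => rfl

lemma natFloor_inv (hu : IsTailSeq a u) (n : ℕ) : ⌊(u n)⁻¹⌋₊ = a n := by
  rw [hu.eq_inv, inv_inv, add_comm, Nat.floor_add_natCast (hu.nonneg _),
    Nat.floor_eq_zero.2 (hu.lt_one _), zero_add]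

lemma coeff_unique (hu : IsTailSeq a u) (hv : IsTailSeq b v) (h : u 0 = v 0) : a = b := by
  have hcoeff {n : ℕ} (hn : u n = v n) : a n = b n :=
    PNat.coe_injective (by rw [← hu.natFloor_inv, ← hv.natFloor_inv, hn])
  have htail (n : ℕ) : u n = v n := by
    induction n with
    | zero => exact h
    | succ n ih =>
      have hinv : a n + u (n + 1) = b n + v (n + 1) :=
        inv_injective (by rw [← hu.eq_inv, ← hv.eq_inv, ih])
      rwa [hcoeff ih, add_right_inj] at hinv
  exact funext fun n => hcoeff (htail n)

-- Infinite descent: if `u n = p / q`, then `u (n + 1) = (q - a n * p) / p` with `p < q`.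
lemma mul_natCast_ne_intCast (hu : IsTailSeq a u) {q : ℕ} (hq : 0 < q) (n : ℕ) (p : ℤ) :
    u n * q ≠ p := by
  induction q using Nat.strong_induction_on generalizing n p with
  | _ q ih =>
    intro h
    have hq' : (0 : ℝ) < q := mod_cast hq
    have hp : 0 < p := by
      have : (0 : ℝ) < p := h ▸ mul_pos (hu.pos n) hq'
      exact_mod_cast this
    lift p to ℕ using hp.le
    have hpq : p < q := by
      have : (p : ℝ) < q := by
        rw [← Int.cast_natCast p, ← h]
        exact mul_lt_of_lt_one_left hq' (hu.lt_one n)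
      exact_mod_cast this
    refine ih p hpq (mod_cast hp) (n + 1) (q - a n * p) ?_
    have hrec : (a n + u (n + 1)) * u n = 1 := by
      rw [hu.eq_inv n, mul_inv_cancel₀ (hu.denom_pos n).ne']
    push_cast at h ⊢
    rw [← h]
    linear_combination q * hrec

lemma irrational (hu : IsTailSeq a u) (n : ℕ) : Irrational (u n) := by
  rintro ⟨r, hr⟩
  refine hu.mul_natCast_ne_intCast r.den_pos n r.num ?_
  rw [← hr]
  exact_mod_cast r.mul_den_eq_num

end IsTailSeq

/-- The tail `[a_{n+1}, a_{n+2}, …]` of the continued fraction `[a_1, a_2, …]`. -/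
noncomputable def cfTail (a : ℕ → ℕ+) (n : ℕ) : ℝ := cfVal fun j => a (j + n)

lemma isTailSeq_cfTail (a : ℕ → ℕ+) : IsTailSeq a (cfTail a) where
  nonneg n := cfVal_nonneg _
  eq_inv n := by
    rw [cfTail, cfVal_eq_inv]
    simp only [cfTail, zero_add, add_assoc, add_comm 1]

lemma IsTailSeq.cfVal_eq {a : ℕ → ℕ+} {u : ℕ → ℝ} (hu : IsTailSeq a u) : cfVal a = u 0 :=
  (isTailSeq_cfTail a).apply_zero_unique hu

lemma cfVal_injective : Function.Injective cfVal := fun a b h =>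
  (isTailSeq_cfTail a).coeff_unique (isTailSeq_cfTail b) h

section GaussMap

/-- The Gauss map `x ↦ 1/x - ⌊1/x⌋`, which deletes the first partial quotient of `x`. -/
noncomputable def gaussMap (x : ℝ) : ℝ := Int.fract x⁻¹

lemma irrational_iterate_gaussMap {x : ℝ} (hx : Irrational x) (n : ℕ) :
    Irrational (gaussMap^[n] x) := by
  induction n with
  | zero => exact hx
  | succ n ih =>
    rw [Function.iterate_succ_apply']
    exact ih.inv.sub_intCast _

lemma iterate_gaussMap_mem_Ioo {x : ℝ} (hx : x ∈ Iirr) (n : ℕ) :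
    gaussMap^[n] x ∈ Set.Ioo 0 1 := by
  have hirr := irrational_iterate_gaussMap hx.2 n
  have hmem : gaussMap^[n] x ∈ Set.Icc 0 1 := by
    cases n with
    | zero => exact hx.1
    | succ n =>
      rw [Function.iterate_succ_apply']
      exact ⟨Int.fract_nonneg _, (Int.fract_lt_one _).le⟩
  exact ⟨hmem.1.lt_of_ne' hirr.ne_zero, hmem.2.lt_of_ne hirr.ne_one⟩

lemma exists_isTailSeq_iterate_gaussMap {x : ℝ} (hx : x ∈ Iirr) :
    ∃ a : ℕ → ℕ+, IsTailSeq a fun n => gaussMap^[n] x := by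
  have hIoo := iterate_gaussMap_mem_Ioo hx
  have hfloor (n : ℕ) : 0 < ⌊(gaussMap^[n] x)⁻¹⌋₊ :=
    Nat.floor_pos.2 ((one_le_inv₀ (hIoo n).1).2 (hIoo n).2.le)
  refine ⟨fun n => ⟨_, hfloor n⟩, fun n => (hIoo n).1.le, fun n => ?_⟩
  rw [Function.iterate_succ_apply', gaussMap, PNat.mk_coe,
    natCast_floor_eq_intCast_floor (inv_pos.2 (hIoo n).1).le, Int.floor_add_fract, inv_inv]

end GaussMap

lemma range_cfVal : Set.range cfVal = Iirr := by
  ext x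
  constructor
  · rintro ⟨a, rfl⟩
    have ha := isTailSeq_cfTail a
    exact ⟨⟨ha.nonneg 0, (ha.lt_one 0).le⟩, ha.irrational 0⟩
  · intro hx
    obtain ⟨a, ha⟩ := exists_isTailSeq_iterate_gaussMap hx
    exact ⟨a, ha.cfVal_eq⟩

lemma cfVal_mem_Iirr (a : ℕ → ℕ+) : cfVal a ∈ Iirr :=
  range_cfVal ▸ Set.mem_range_self a

lemma coeff_cfVal (a : ℕ → ℕ+) : coeff (cfVal a) = a := by
  have hex : ∃ b, cfVal b = cfVal a := ⟨a, rfl⟩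
  rw [coeff, dif_pos hex]
  exact cfVal_injective hex.choose_spec

lemma cantorF1_cfVal (a : ℕ → ℕ+) : cantorF1 (cfVal a) = cfVal fun j => a (2 * j) := by
  rw [cantorF1, coeff_cfVal]

section Perturbation

lemma cfTail_update_succ (a : ℕ → ℕ+) (n : ℕ) (k : ℕ+) :
    cfTail (Function.update a n k) (n + 1) = cfTail a (n + 1) :=
  congrArg cfVal (funext fun _ => Function.update_of_ne (by omega) _ _)

lemma le_abs_cfVal_sub_cfVal_update {a : ℕ → ℕ+} {K n : ℕ} (hK : ∀ j ≤ n, (a j : ℕ) ≤ K) :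
    (((K + 2 : ℝ) ^ (n + 1)) ^ 2)⁻¹ ≤ |cfVal a - cfVal (Function.update a n (a n + 1))| := by
  set b := Function.update a n (a n + 1)
  have ha := isTailSeq_cfTail a
  have hb := isTailSeq_cfTail b
  have hab (i : ℕ) (hi : i < n) : a i = b i := (Function.update_of_ne hi.ne _ _).symm
  have hlast : |cfTail a n - cfTail b n| = cfTail a n * cfTail b n := by
    rw [ha.abs_sub_eq hb, cfTail_update_succ, add_sub_add_right_eq_sub]
    simp [b]
  have hKb (j : ℕ) (hj : j ≤ n) : (b j : ℕ) ≤ K + 1 := by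
    obtain rfl | hjn := hj.eq_or_lt
    · simpa [b] using hK j le_rfl
    · exact hab j hjn ▸ (hK j hj).trans K.le_succ
  have htail {c : ℕ → ℕ+} (hc : ∀ j ≤ n, (c j : ℕ) ≤ K + 1) {i : ℕ} (hi : i ∈ range (n + 1)) :
      (K + 2 : ℝ)⁻¹ ≤ cfTail c i := by
    have hci : (c i : ℝ) ≤ K + 1 := mod_cast hc i (Nat.le_of_lt_succ (mem_range.1 hi))
    exact (inv_anti₀ (by positivity) (by linarith)).trans ((isTailSeq_cfTail c).inv_add_one_le i)
  calc (((K + 2 : ℝ) ^ (n + 1)) ^ 2)⁻¹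
      = ∏ _i ∈ range (n + 1), (K + 2 : ℝ)⁻¹ * (K + 2 : ℝ)⁻¹ := by
        rw [prod_const, card_range, ← sq, inv_pow, inv_pow, pow_right_comm]
    _ ≤ ∏ i ∈ range (n + 1), cfTail a i * cfTail b i :=
        prod_le_prod (fun _ _ => by positivity) fun i hi =>
          mul_le_mul (htail (fun j hj => (hK j hj).trans K.le_succ) hi) (htail hKb hi)
            (by positivity) (ha.nonneg i)
    _ = |cfVal a - cfVal b| := by
        rw [prod_range_succ, ← hlast]
        exact (ha.abs_sub_eq_prod hb hab).symm

lemma le_abs_cantorF1_sub_cantorF1_update {a : ℕ → ℕ+} {K : ℕ}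
    (hK : ∀ j, Even j → (a j : ℕ) ≤ K) (n : ℕ) :
    (((K + 2 : ℝ) ^ (n + 1)) ^ 2)⁻¹ ≤
      |cantorF1 (cfVal a) - cantorF1 (cfVal (Function.update a (2 * n) (a (2 * n) + 1)))| := by
  have heven : (fun j => Function.update a (2 * n) (a (2 * n) + 1) (2 * j)) =
      Function.update (fun j => a (2 * j)) n (a (2 * n) + 1) :=
    Function.update_comp_eq_of_injective a (mul_right_injective₀ two_ne_zero) n _
  rw [cantorF1_cfVal, cantorF1_cfVal, heven]
  exact le_abs_cfVal_sub_cfVal_update fun j _ => hK _ (even_two_mul j)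

lemma prod_odd_le_prod (a : ℕ → ℕ+) (n : ℕ) :
    ∏ j ∈ range n, (a (2 * j + 1) : ℕ) ≤ ∏ i ∈ range (2 * n), (a i : ℕ) := by
  induction n with
  | zero => simp
  | succ n ih =>
    rw [Nat.mul_succ, prod_range_succ, prod_range_succ, prod_range_succ]
    exact Nat.mul_le_mul_right _ (ih.trans (Nat.le_mul_of_pos_right _ (a _).pos))

lemma abs_cfVal_sub_cfVal_update_le (a : ℕ → ℕ+) (n : ℕ) (k : ℕ+) :
    |cfVal a - cfVal (Function.update a (2 * n) k)| ≤
      ((∏ j ∈ range n, (a (2 * j + 1) : ℝ)) ^ 2)⁻¹ := by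
  have hprod : ∏ j ∈ range n, (a (2 * j + 1) : ℝ) ≤ ∏ i ∈ range (2 * n), (a i : ℝ) :=
    mod_cast prod_odd_le_prod a n
  have : 0 < ∏ j ∈ range n, (a (2 * j + 1) : ℝ) :=
    prod_pos fun j _ => mod_cast (a (2 * j + 1)).pos
  refine ((isTailSeq_cfTail a).abs_sub_le_inv_prod_sq (isTailSeq_cfTail _) fun _ hi =>
    (Function.update_of_ne hi.ne k a).symm).trans ?_
  gcongr

end Perturbation

section HolderExponent

lemma memHolder_zero_of_bounded {g : ℝ → ℝ} {B : ℝ} (hg : ∀ x, |g x| ≤ B) (A : Set ℝ) (x : ℝ) :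
    memHolder g A x 0 := by
  have hB : 0 ≤ B := (abs_nonneg _).trans (hg 0)
  refine ⟨B + B + 1, by positivity, fun y _ => ?_⟩
  rw [Real.rpow_zero, mul_one]
  linarith [abs_sub (g x) (g y), hg x, hg y]

lemma le_holderExp {g : ℝ → ℝ} {A : Set ℝ} {x α : ℝ} (hα : α ∈ Set.Icc 0 1)
    (h : memHolder g A x α) : α ≤ holderExp g A x :=
  le_csSup ⟨1, fun _ hβ => hβ.1.2⟩ ⟨hα, h⟩

lemma holderExp_eq_zero {g : ℝ → ℝ} {A : Set ℝ} {x B : ℝ} (hg : ∀ x, |g x| ≤ B)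
    (h : ∀ α > 0, ¬ memHolder g A x α) : holderExp g A x = 0 := by
  have hgreatest : IsGreatest {α : ℝ | α ∈ Set.Icc (0 : ℝ) 1 ∧ memHolder g A x α} 0 :=
    ⟨⟨by simp, memHolder_zero_of_bounded hg A x⟩, fun α hα => not_lt.1 fun hpos => h α hpos hα.2⟩
  exact hgreatest.csSup_eq

lemma abs_cantorF1_le_one (x : ℝ) : |cantorF1 x| ≤ 1 := by
  have hmem : cantorF1 x ∈ Set.Icc 0 1 := (cfVal_mem_Iirr _).1
  exact abs_le.2 ⟨by linarith [hmem.1], hmem.2⟩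

lemma not_memHolder_cantorF1 {a : ℕ → ℕ+} {K : ℕ} (hK : ∀ j, Even j → (a j : ℕ) ≤ K)
    (hgrow : ∀ R : ℕ, ∃ᶠ n in atTop, R ^ n ≤ ∏ j ∈ range n, (a (2 * j + 1) : ℕ))
    {α : ℝ} (hα : 0 < α) : ¬ memHolder cantorF1 Iirr (cfVal a) α := by
  rintro ⟨C, hC, hHolder⟩
  -- With this `R`, the Hölder bound `C * R ^ (-2 * α * n)` on the variation of `f₁` is smaller, by
  -- a factor of order `4 ^ n`, than the actual variation, at least `(K + 2) ^ (-2 * (n + 1))`.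
  obtain ⟨R, hRα, hR⟩ : ∃ R : ℕ, 2 * (K + 2 : ℝ) ≤ (R : ℝ) ^ α ∧ 0 < R :=
    ((((tendsto_rpow_atTop hα).comp tendsto_natCast_atTop_atTop).eventually_ge_atTop _).and
      (eventually_gt_atTop 0)).exists
  obtain ⟨n, hRn, hCn⟩ : ∃ n : ℕ, R ^ n ≤ ∏ j ∈ range n, (a (2 * j + 1) : ℕ) ∧
      C * (K + 2 : ℝ) ^ 2 < 4 ^ n :=
    ((hgrow R).and_eventually <|
      (tendsto_pow_atTop_atTop_of_one_lt (by norm_num)).eventually_gt_atTop _).exists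
  set b := Function.update a (2 * n) (a (2 * n) + 1)
  have hfar : (((K + 2 : ℝ) ^ (n + 1)) ^ 2)⁻¹ ≤ |cantorF1 (cfVal a) - cantorF1 (cfVal b)| :=
    le_abs_cantorF1_sub_cantorF1_update hK n
  have hnear : |cfVal a - cfVal b| ^ α ≤ (((2 * (K + 2 : ℝ)) ^ n) ^ 2)⁻¹ := by
    have hRn' : (R : ℝ) ^ n ≤ ∏ j ∈ range n, (a (2 * j + 1) : ℝ) := mod_cast hRn
    calc |cfVal a - cfVal b| ^ α ≤ ((((R : ℝ) ^ n) ^ 2)⁻¹) ^ α := by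
          gcongr
          refine (abs_cfVal_sub_cfVal_update_le a n _).trans ?_
          gcongr
      _ = ((((R : ℝ) ^ α) ^ n) ^ 2)⁻¹ := by
          rw [Real.inv_rpow (by positivity), ← Real.rpow_pow_comm (by positivity),
            ← Real.rpow_pow_comm (by positivity)]
      _ ≤ (((2 * (K + 2 : ℝ)) ^ n) ^ 2)⁻¹ := by gcongr
  have hle : (((K + 2 : ℝ) ^ (n + 1)) ^ 2)⁻¹ ≤ C * (((2 * (K + 2 : ℝ)) ^ n) ^ 2)⁻¹ :=
    hfar.trans <| (hHolder _ (cfVal_mem_Iirr b)).trans <| mul_le_mul_of_nonneg_left hnear hC.le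
  have hpow : ((2 * (K + 2 : ℝ)) ^ n) ^ 2 = 4 ^ n * ((K + 2 : ℝ) ^ n) ^ 2 := by
    rw [mul_pow, mul_pow, pow_right_comm]
    norm_num
  rw [hpow, pow_succ (K + 2 : ℝ), mul_pow] at hle
  field_simp at hle
  linarith

lemma holderExp_cantorF1_eq_zero {a : ℕ → ℕ+} {K : ℕ} (hK : ∀ j, Even j → (a j : ℕ) ≤ K)
    (hgrow : ∀ R : ℕ, ∃ᶠ n in atTop, R ^ n ≤ ∏ j ∈ range n, (a (2 * j + 1) : ℕ)) :
    holderExp cantorF1 Iirr (cfVal a) = 0 :=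
  holderExp_eq_zero abs_cantorF1_le_one fun _ hα => not_memHolder_cantorF1 hK hgrow hα

end HolderExponent

section ConstantOne

lemma three_fifths_le_cfVal_one : 3 / 5 ≤ cfVal 1 := by
  have hnonneg : 0 ≤ cfVal 1 := cfVal_nonneg 1
  have hinv : cfVal 1 = ((1 : ℕ+) + cfVal 1)⁻¹ := cfVal_eq_inv 1
  have hrec : cfVal 1 * (1 + cfVal 1) = 1 := by
    rwa [PNat.one_coe, Nat.cast_one, inv_eq_one_div, eq_div_iff (by positivity)] at hinv
  nlinarith

lemma le_abs_cfVal_one_sub_cfVal {b : ℕ → ℕ+} {n : ℕ} (hb : ∀ i < n, b i = 1) (hbn : b n ≠ 1) :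
    1 / 10 * (1 / 4) ^ n ≤ |cfVal 1 - cfVal b| := by
  have hu := isTailSeq_cfTail 1
  have hv := isTailSeq_cfTail b
  have hlast : (1 / 10 : ℝ) ≤ |cfTail 1 n - cfTail b n| := by
    have hbn' : (2 : ℝ) ≤ b n := by
      have : 1 < b n := one_le.lt_of_ne' hbn
      exact_mod_cast this
    have hle : cfTail b n ≤ 1 / 2 := (hv.le_inv n).trans (by simpa using inv_anti₀ two_pos hbn')
    have hge : 3 / 5 ≤ cfTail 1 n := three_fifths_le_cfVal_one
    exact (by linarith : (1 / 10 : ℝ) ≤ cfTail 1 n - cfTail b n).trans (le_abs_self _)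
  have hhalf {c : ℕ → ℕ+} {i : ℕ} (hc : c i = 1) : 1 / 2 ≤ cfTail c i :=
    le_of_eq_of_le (by norm_num [hc]) ((isTailSeq_cfTail c).inv_add_one_le i)
  have hprod : (1 / 4 : ℝ) ^ n ≤ ∏ i ∈ range n, cfTail 1 i * cfTail b i :=
    calc (1 / 4 : ℝ) ^ n = ∏ _i ∈ range n, (1 / 2 : ℝ) * (1 / 2) := by
          rw [prod_const, card_range]; norm_num
      _ ≤ _ := prod_le_prod (fun _ _ => by norm_num) fun i hi =>
          mul_le_mul (hhalf rfl) (hhalf (hb i (mem_range.1 hi))) (by norm_num) (hu.nonneg i)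
  calc (1 / 10 : ℝ) * (1 / 4) ^ n
      ≤ |cfTail 1 n - cfTail b n| * ∏ i ∈ range n, cfTail 1 i * cfTail b i := by gcongr
    _ = |cfVal 1 - cfVal b| := by
        rw [mul_comm]
        exact (hu.abs_sub_eq_prod hv fun i hi => (hb i hi).symm).symm

lemma memHolder_cantorF1_cfVal_one : memHolder cantorF1 Iirr (cfVal 1) 4⁻¹ := by
  refine ⟨40, by norm_num, fun y hy => ?_⟩
  obtain ⟨b, rfl⟩ : y ∈ Set.range cfVal := range_cfVal ▸ hy
  obtain rfl | hb := eq_or_ne b 1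
  · rw [sub_self, abs_zero]
    positivity
  have hex : ∃ n, b n ≠ 1 := Function.ne_iff.1 hb
  obtain ⟨n, hbn, hmin⟩ : ∃ n, b n ≠ 1 ∧ ∀ i < n, b i = 1 :=
    ⟨_, Nat.find_spec hex, fun _ hi => not_not.1 (Nat.find_min hex hi)⟩
  obtain ⟨k, hkn, hnk⟩ : ∃ k, 4 * k ≤ n ∧ n ≤ 4 * (k + 1) := ⟨n / 4, by omega, by omega⟩
  have hnear : |cantorF1 (cfVal 1) - cantorF1 (cfVal b)| ≤ (1 / 4) ^ k := by
    rw [cantorF1_cfVal, cantorF1_cfVal]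
    exact (isTailSeq_cfTail 1).abs_sub_le_quarter_pow (isTailSeq_cfTail fun j => b (2 * j))
      fun i hi => (hmin (2 * i) (by omega)).symm
  have hfar : (1 / 40 * (1 / 4) ^ k) ^ 4 ≤ |cfVal 1 - cfVal b| :=
    calc (1 / 40 * (1 / 4 : ℝ) ^ k) ^ 4 ≤ 1 / 10 * (1 / 4) ^ (4 * (k + 1)) := by
          rw [mul_pow, ← pow_mul, mul_add, pow_add, mul_comm k]
          linarith [show (0 : ℝ) < (1 / 4) ^ (4 * k) by positivity]
      _ ≤ 1 / 10 * (1 / 4) ^ n := by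
          gcongr 1 / 10 * ?_
          exact pow_le_pow_of_le_one (by norm_num) (by norm_num) hnk
      _ ≤ |cfVal 1 - cfVal b| := le_abs_cfVal_one_sub_cfVal hmin hbn
  have hroot : 1 / 40 * (1 / 4) ^ k ≤ |cfVal 1 - cfVal b| ^ (4⁻¹ : ℝ) := by
    rw [Real.le_rpow_inv_iff_of_pos (by positivity) (abs_nonneg _) (by norm_num),
      Real.rpow_ofNat]
    exact hfar
  linarith

end ConstantOne

lemma frequently_pow_le_prod_two_pow (R : ℕ) :
    ∃ᶠ n in atTop, R ^ n ≤ ∏ j ∈ range n, 2 ^ (2 * j + 2) := by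
  have hprod (n : ℕ) : ∏ j ∈ range n, 2 ^ (2 * j + 2) = (2 ^ (n + 1)) ^ n := by
    induction n with
    | zero => rfl
    | succ n ih =>
      rw [prod_range_succ, ih, ← pow_mul, ← pow_add, ← pow_mul]
      congr 1
      ring
  refine Eventually.frequently ((eventually_ge_atTop R).mono fun n hn => ?_)
  rw [hprod]
  gcongr
  exact (hn.trans n.le_succ).trans Nat.lt_two_pow_self.le

theorem holderExp_cantorF1_special_point_general {a : ℕ → ℕ+} {K : ℕ}
    (hK : ∀ j, Even j → (a j : ℕ) ≤ K)
    (hgrow : ∀ R : ℕ, ∃ᶠ n in atTop, R ^ n ≤ ∏ j ∈ range n, (a (2 * j + 1) : ℕ)) :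
    holderExp cantorF1 Iirr (cfVal a) = 0 ∧
      ∃ y ∈ Iirr, holderExp cantorF1 Iirr y ≠ holderExp cantorF1 Iirr (cfVal a) := by
  have hzero := holderExp_cantorF1_eq_zero hK hgrow
  have hquarter := le_holderExp (by norm_num) memHolder_cantorF1_cfVal_one
  exact ⟨hzero, cfVal 1, cfVal_mem_Iirr 1, by linarith⟩

/-- For the sequence `a` with `a_j = 2^j` for even `j` and `a_j = 1` for odd `j`
(0-indexed: `a j = a_{j+1}`, so `a j = 2^(j+1)` for odd `j` and `a j = 1` for even `j`),
the Hölder exponent of `f₁` at `x = [a_1,a_2,…]` is `0`; in particular `f₁` is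
multifractal (its Hölder exponent is not almost surely constant). -/
theorem holderExp_cantorF1_special_point (a : ℕ → ℕ+)
    (ha : ∀ j : ℕ, Odd j → (a j : ℕ) = 2 ^ (j+1))
    (ha' : ∀ j : ℕ, Even j → a j = 1) :
    holderExp cantorF1 Iirr (cfVal a) = 0 ∧
      ∃ y ∈ Iirr, holderExp cantorF1 Iirr y ≠ holderExp cantorF1 Iirr (cfVal a) :=
  holderExp_cantorF1_special_point_general (K := 1) (fun j hj => by rw [ha' j hj, PNat.one_coe])
    fun R => by simpa only [ha _ (odd_two_mul_add_one _)] using frequently_pow_le_prod_two_pow R
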